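/- There exist a constant C > 0 and a natural number L such that for every λ ∈ ℂ with 0 < Im λ < ρ and |λ| ≥ ρ, and every measurable f : (0,∞) → ℂ with ‖f‖ := ∫₀^∞ |f(s)| Δ(s) ds < ∞, one has ∫₀^∞ |T_λf(t)| Δ(t) dt ≤ C ‖f‖ (1+|λ|)^L/(ρ − Im λ). (Here ρ − Im λ is the distance from λ to the boundary of the strip {|Im z| ≤ ρ}.) -/

import Mathlib

open Complex MeasureTheory Set

noncomputable section

/-- Gauss hypergeometric function ₂F₁ as a power series sum. -/
def hyp (a b c x : ℂ) : ℂ :=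
  ∑' n : ℕ, (ascPochhammer ℂ n).eval a * (ascPochhammer ℂ n).eval b /
    ((ascPochhammer ℂ n).eval c * (n.factorial : ℂ)) * x ^ n

/-- ρ = (m₁ + 2 m₂)/2 -/
def rho (m₁ m₂ : ℕ) : ℝ := ((m₁ : ℝ) + 2 * m₂) / 2

/-- Δ(t) = (2 sinh t)^(m₁+m₂) (2 cosh t)^(m₂) -/
def Del (m₁ m₂ : ℕ) (t : ℝ) : ℝ :=
  (2 * Real.sinh t) ^ (m₁ + m₂) * (2 * Real.cosh t) ^ m₂

/-- The solution Φ_λ. -/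
def Phi (m₁ m₂ : ℕ) (l : ℂ) (t : ℝ) : ℂ :=
  ((2 * Real.cosh t : ℝ) : ℂ) ^ (Complex.I * l - (rho m₁ m₂ : ℂ)) *
    hyp (((rho m₁ m₂ : ℂ) - Complex.I * l) / 2) (((m₁ : ℂ) + 2) / 4 - Complex.I * l / 2)
      (1 - Complex.I * l) ((((Real.cosh t) ^ 2 : ℝ) : ℂ))⁻¹

/-- The function b_λ. -/
def bfun (m₁ m₂ : ℕ) (l : ℂ) (t : ℝ) : ℂ :=
  (2 : ℂ) ^ (-(rho m₁ m₂ : ℂ) - 1 - Complex.I * l) *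
    (Complex.Gamma (((rho m₁ m₂ : ℂ) - Complex.I * l) / 2) *
      Complex.Gamma (((m₁ : ℂ) + 2) / 4 - Complex.I * l / 2) /
      (Complex.Gamma (((m₁ : ℂ) + (m₂ : ℂ) + 1) / 2) * Complex.Gamma (1 - Complex.I * l))) *
    Phi m₁ m₂ l t

/-- The elementary spherical function φ_λ. -/
def sph (m₁ m₂ : ℕ) (l : ℂ) (t : ℝ) : ℂ :=
  ((Real.cosh t : ℝ) : ℂ) ^ (-((rho m₁ m₂ : ℂ) + Complex.I * l)) *
    hyp (((m₁ : ℂ) + 2) / 4 + Complex.I * l / 2) (((rho m₁ m₂ : ℂ) + Complex.I * l) / 2)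
      (((m₁ : ℂ) + (m₂ : ℂ) + 1) / 2) (((Real.tanh t) ^ 2 : ℝ) : ℂ)

/-- The operator T_λ. -/
def Tfun (m₁ m₂ : ℕ) (l : ℂ) (f : ℝ → ℂ) (t : ℝ) : ℂ :=
  bfun m₁ m₂ l t * (∫ s in Set.Ioi t, f s * sph m₁ m₂ l s * (Del m₁ m₂ s : ℂ)) -
    sph m₁ m₂ l t * (∫ s in Set.Ioi t, f s * bfun m₁ m₂ l s * (Del m₁ m₂ s : ℂ))

/-!
With `μ = iλ` and `μ = -iλ` respectively, `φ_λ` and `Φ_λ` solve the same Jacobi equation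
`u'' + (Δ'/Δ) u' + (ρ² - μ²) u = 0`. Replacing `u'` by `u' + ρ tanh · u` leaves the integrable
potential `ρ (m₁/2 + 1) / cosh²`, so the energy `‖u' + ρ tanh · u‖² + ‖λ‖² ‖u‖²` changes only by an
explicit exponential factor, up to a bounded one. Transporting it from `t = 0` for `φ_λ` and from
`t = ∞` for `Φ_λ` gives `‖Φ_λ(t)‖ Δ(t) ‖φ_λ(s)‖ ≲ e^((ρ - Im λ)(t - s))`. The Gamma quotient in
`b_λ` is a product of two Beta integrals, up to factors of polynomial growth in `λ`. Hence `T_λ` is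
a Volterra operator whose kernel is dominated by `e^(-(ρ - Im λ)(s - t))`, and Tonelli produces the
factor `1 / (ρ - Im λ)`.
-/

open Filter Topology

section PowerSeries

variable {𝕜 : Type*} [NontriviallyNormedField 𝕜] {f : 𝕜 → 𝕜}
  {p : FormalMultilinearSeries 𝕜 𝕜 𝕜} {r : ENNReal} {x : 𝕜}

lemma hasSum_coeff_mul_pow (hf : HasFPowerSeriesOnBall f p 0 r) (hx : x ∈ Metric.eball 0 r) :
    HasSum (fun n => p.coeff n * x ^ n) (f x) := by
  simpa [FormalMultilinearSeries.apply_eq_pow_smul_coeff, mul_comm] using hf.hasSum hx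

variable [CompleteSpace 𝕜]

lemma hasFPowerSeriesOnBall_deriv (hf : HasFPowerSeriesOnBall f p 0 r) :
    ∃ q : FormalMultilinearSeries 𝕜 𝕜 𝕜, HasFPowerSeriesOnBall (deriv f) q 0 r ∧
      ∀ n : ℕ, q.coeff n = (n + 1) * p.coeff (n + 1) := by
  have hderiv : deriv f = ContinuousLinearMap.apply 𝕜 𝕜 (1 : 𝕜) ∘ fderiv 𝕜 f :=
    funext fun x => fderiv_apply_one_eq_deriv.symm
  rw [hderiv]
  refine ⟨_, (ContinuousLinearMap.apply 𝕜 𝕜 1).comp_hasFPowerSeriesOnBall hf.fderiv, fun n => ?_⟩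
  have hcoeff := p.derivSeries_coeff_one n
  rw [nsmul_eq_mul, Nat.cast_add_one] at hcoeff
  exact hcoeff

lemma hasSum_mul_deriv (hf : HasFPowerSeriesOnBall f p 0 r) (hx : x ∈ Metric.eball 0 r) :
    HasSum (fun n : ℕ => n * p.coeff n * x ^ n) (x * deriv f x) := by
  obtain ⟨q, hq, hcoeff⟩ := hasFPowerSeriesOnBall_deriv hf
  rw [← hasSum_nat_add_iff' 1]
  simp only [Finset.sum_range_one, Nat.cast_zero, zero_mul, sub_zero]
  refine ((hasSum_coeff_mul_pow hq hx).mul_left x).congr_fun fun n => ?_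
  rw [hcoeff, Nat.cast_add_one, pow_succ]
  ring

end PowerSeries

section Hypergeometric

/-- Gauss's hypergeometric operator `x (1 - x) F'' + (c - (a + b + 1) x) F' - a b F` at `x`, which
annihilates `₂F₁(a, b; c; ·)`. -/
def gaussOperator (a b c : ℂ) (F : ℂ → ℂ) (x : ℂ) : ℂ :=
  x * (1 - x) * deriv (deriv F) x + (c - (a + b + 1) * x) * deriv F x - a * b * F x

variable {a b c x : ℂ}

lemma mem_eball_zero_one (hx : ‖x‖ < 1) : x ∈ Metric.eball (0 : ℂ) 1 := by
  rwa [← ENNReal.ofReal_one, Metric.eball_ofReal, mem_ball_zero_iff]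

lemma ordinaryHypergeometricSeries_coeff (n : ℕ) :
    (ordinaryHypergeometricSeries ℂ a b c).coeff n =
      (ascPochhammer ℂ n).eval a * (ascPochhammer ℂ n).eval b /
        ((ascPochhammer ℂ n).eval c * (n.factorial : ℂ)) := by
  rw [ordinaryHypergeometricSeries, FormalMultilinearSeries.coeff_ofScalars]
  simp only [ordinaryHypergeometricCoefficient, div_eq_mul_inv, mul_inv]
  ring

lemma ordinaryHypergeometricSeries_coeff_succ (hc : ∀ k : ℕ, c ≠ -k) (n : ℕ) :
    (c + n) * ((n + 1) * (ordinaryHypergeometricSeries ℂ a b c).coeff (n + 1)) =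
      (a + n) * (b + n) * (ordinaryHypergeometricSeries ℂ a b c).coeff n := by
  have hcn : c + n ≠ 0 := fun h => hc n (eq_neg_of_add_eq_zero_left h)
  have hn : (n : ℂ) + 1 ≠ 0 := n.cast_add_one_ne_zero
  simp only [ordinaryHypergeometricSeries_coeff, ascPochhammer_succ_eval, Nat.factorial_succ,
    Nat.cast_mul, Nat.cast_add_one]
  field_simp

lemma hyp_eq_ordinaryHypergeometric : hyp a b c = ordinaryHypergeometric a b c := by
  ext x
  rw [hyp, ordinaryHypergeometric_eq_tsum]
  refine tsum_congr fun n => ?_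
  rw [smul_eq_mul, div_eq_mul_inv, mul_inv]
  ring

lemma one_le_radius_ordinaryHypergeometricSeries (hc : ∀ k : ℕ, c ≠ -k) :
    1 ≤ (ordinaryHypergeometricSeries ℂ a b c).radius := by
  have hseries : ordinaryHypergeometricSeries ℂ a b c =
      Complex.Gamma c • regularizedGaussHGFunSeries a b c := by
    ext n
    have hcoeff := Gamma_inv_mul_ordinaryHypergeometricSeries_eq (a := a) (b := b) hc (n := n)
    have hΓ : Complex.Gamma c ≠ 0 := Complex.Gamma_ne_zero hc
    simp [← hcoeff, hΓ]
  rw [hseries]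
  exact (radius_regularizedGaussHGFunSeries_ge_one a b c).trans
    (FormalMultilinearSeries.radius_le_smul)

lemma hasFPowerSeriesOnBall_hyp (hc : ∀ k : ℕ, c ≠ -k) :
    HasFPowerSeriesOnBall (hyp a b c) (ordinaryHypergeometricSeries ℂ a b c) 0 1 := by
  have hradius := one_le_radius_ordinaryHypergeometricSeries (a := a) (b := b) hc
  rw [hyp_eq_ordinaryHypergeometric]
  exact ((ordinaryHypergeometricSeries ℂ a b c).hasFPowerSeriesOnBall
    (zero_lt_one.trans_le hradius)).mono zero_lt_one hradius

lemma hyp_zero : hyp a b c 0 = 1 := by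
  rw [hyp_eq_ordinaryHypergeometric, ordinaryHypergeometric_zero]

lemma analyticAt_hyp (hc : ∀ k : ℕ, c ≠ -k) (hx : ‖x‖ < 1) : AnalyticAt ℂ (hyp a b c) x :=
  (hasFPowerSeriesOnBall_hyp hc).analyticAt_of_mem
    (mem_eball_zero_one hx)

theorem gaussOperator_hyp (hc : ∀ k : ℕ, c ≠ -k) (hx : ‖x‖ < 1) :
    gaussOperator a b c (hyp a b c) x = 0 := by
  have hxball : x ∈ Metric.eball (0 : ℂ) 1 := mem_eball_zero_one hx
  have hF := hasFPowerSeriesOnBall_hyp (a := a) (b := b) hc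
  obtain ⟨q, hF', hq⟩ := hasFPowerSeriesOnBall_deriv hF
  have hxF' := hasSum_mul_deriv hF hxball
  have hxF'' := hasSum_mul_deriv hF' hxball
  have hxxF'' : HasSum (fun n : ℕ => n * (n - 1) *
      (ordinaryHypergeometricSeries ℂ a b c).coeff n * x ^ n)
      (x * (x * deriv (deriv (hyp a b c)) x)) := by
    rw [← hasSum_nat_add_iff' 1]
    simp only [Finset.sum_range_one, Nat.cast_zero, zero_mul, sub_zero]
    refine (hxF''.mul_left x).congr_fun fun n => ?_
    rw [hq, Nat.cast_add_one, pow_succ]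
    ring
  have hsum := (((hxF''.sub hxxF'').add ((hasSum_coeff_mul_pow hF' hxball).mul_left c)).sub
    (hxF'.mul_left (a + b + 1))).sub ((hasSum_coeff_mul_pow hF hxball).mul_left (a * b))
  have hzero := (hsum.congr_fun fun n => (by
    rw [hq]
    linear_combination -x ^ n * ordinaryHypergeometricSeries_coeff_succ (a := a) (b := b) hc n :
      (0 : ℂ) = _)).unique hasSum_zero
  rw [gaussOperator]
  linear_combination hzero

lemma gaussOperator_comp_one_sub {F : ℂ → ℂ} :
    gaussOperator a b c (fun y => F (1 - y)) x = gaussOperator a b (a + b + 1 - c) F (1 - x) := by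
  have hderiv : deriv (fun y => F (1 - y)) = fun y => -deriv F (1 - y) :=
    funext fun y => deriv_comp_const_sub ..
  rw [gaussOperator, gaussOperator, hderiv, deriv.fun_neg, deriv_comp_const_sub]
  ring

end Hypergeometric

section Monotonicity

variable {f f' p k : ℝ → ℝ} {a : ℝ}

lemma monotoneOn_Ioi_mul_of_neg_mul_le (hf : ∀ t > a, HasDerivAt f (f' t) t)
    (hp : ∀ t > a, HasDerivAt p (k t * p t) t) (hp₀ : ∀ t > a, 0 ≤ p t)
    (hle : ∀ t > a, -(k t * f t) ≤ f' t) : MonotoneOn (fun t => f t * p t) (Ioi a) := by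
  have hderiv : ∀ t > a, HasDerivAt (fun t => f t * p t) (f' t * p t + f t * (k t * p t)) t :=
    fun t ht => (hf t ht).mul (hp t ht)
  refine monotoneOn_of_deriv_nonneg (convex_Ioi a)
    (fun t ht => (hderiv t ht).continuousAt.continuousWithinAt) ?_ ?_ <;>
    rw [interior_Ioi]
  · exact fun t ht => (hderiv t ht).differentiableAt.differentiableWithinAt
  · intro t ht
    rw [(hderiv t ht).deriv]
    nlinarith [mul_nonneg (neg_le_iff_add_nonneg.1 (hle t ht)) (hp₀ t ht)]

lemma antitoneOn_Ioi_mul_of_le_neg_mul (hf : ∀ t > a, HasDerivAt f (f' t) t)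
    (hp : ∀ t > a, HasDerivAt p (k t * p t) t) (hp₀ : ∀ t > a, 0 ≤ p t)
    (hle : ∀ t > a, f' t ≤ -(k t * f t)) : AntitoneOn (fun t => f t * p t) (Ioi a) := by
  have hneg := monotoneOn_Ioi_mul_of_neg_mul_le (fun t ht => (hf t ht).neg) hp hp₀
    fun t ht => by simpa using neg_le_neg (hle t ht)
  simpa using! hneg.neg

end Monotonicity

section Hyperbolic

lemma one_sub_tanh_sq (t : ℝ) : 1 - Real.tanh t ^ 2 = (Real.cosh t ^ 2)⁻¹ := by
  have hcosh := (Real.cosh_pos t).ne'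
  rw [Real.tanh_eq_sinh_div_cosh]
  field_simp
  linarith [Real.cosh_sq t]

lemma hasDerivAt_tanh (t : ℝ) : HasDerivAt Real.tanh (1 - Real.tanh t ^ 2) t := by
  have hcosh := (Real.cosh_pos t).ne'
  have hdiv := (Real.hasDerivAt_sinh t).div (Real.hasDerivAt_cosh t) hcosh
  have htanh : Real.tanh = Real.sinh / Real.cosh := funext Real.tanh_eq_sinh_div_cosh
  rw [htanh]
  convert! hdiv using 1
  rw [Pi.div_apply]
  field_simp

lemma hasDerivAt_log_cosh (t : ℝ) :
    HasDerivAt (fun s => Real.log (Real.cosh s)) (Real.tanh t) t := by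
  rw [Real.tanh_eq_sinh_div_cosh]
  exact (Real.hasDerivAt_cosh t).log (Real.cosh_pos t).ne'

lemma tanh_pos {t : ℝ} (ht : 0 < t) : 0 < Real.tanh t := by
  rw [Real.tanh_eq_sinh_div_cosh]
  exact div_pos (Real.sinh_pos_iff.2 ht) (Real.cosh_pos t)

lemma tendsto_cosh_atTop : Tendsto Real.cosh atTop atTop := by
  refine tendsto_atTop_mono' atTop ?_ tendsto_id
  filter_upwards [eventually_ge_atTop 0] with t ht
  exact (Real.self_le_sinh_iff.2 ht).trans (Real.sinh_lt_cosh t).le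

lemma tendsto_tanh_atTop : Tendsto Real.tanh atTop (𝓝 1) := by
  have hcosh : Tendsto (fun t => 1 - (Real.cosh t ^ 2)⁻¹) atTop (𝓝 1) := by
    simpa using! ((tendsto_pow_atTop (α := ℝ) two_ne_zero).comp
      tendsto_cosh_atTop).inv_tendsto_atTop.const_sub 1
  refine tendsto_of_tendsto_of_tendsto_of_le_of_le' hcosh tendsto_const_nhds ?_
    (Eventually.of_forall fun t => (Real.tanh_lt_one t).le)
  filter_upwards [eventually_gt_atTop 0] with t ht
  rw [← one_sub_tanh_sq]
  nlinarith [tanh_pos ht, Real.tanh_lt_one t]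

lemma le_log_two_mul_cosh (t : ℝ) : t ≤ Real.log (2 * Real.cosh t) := by
  rw [Real.le_log_iff_exp_le (by positivity), Real.cosh_eq]
  linarith [Real.exp_pos (-t)]

lemma log_cosh_le {t : ℝ} (ht : 0 ≤ t) : Real.log (Real.cosh t) ≤ t := by
  rw [Real.log_le_iff_le_exp (Real.cosh_pos t), Real.cosh_eq]
  have hexp : Real.exp (-t) ≤ Real.exp t := Real.exp_le_exp.2 (by linarith)
  linarith

lemma sinh_mul_exp_le {t d : ℝ} (hd : 0 ≤ d) :
    Real.sinh t * Real.exp d ≤ Real.sinh (t + d) := by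
  have hexp : Real.exp (-(t + d)) ≤ Real.exp (-t + d) := Real.exp_le_exp.2 (by linarith)
  rw [Real.sinh_eq, Real.sinh_eq, div_mul_eq_mul_div, sub_mul, ← Real.exp_add, ← Real.exp_add]
  linarith

end Hyperbolic

section Density

variable {m₁ m₂ : ℕ} {t : ℝ}

lemma rho_nonneg : 0 ≤ rho m₁ m₂ := by
  rw [rho]
  positivity

lemma rho_pos (hm₁ : 0 < m₁) : 0 < rho m₁ m₂ := by
  rw [rho]
  positivity

lemma Del_pos (ht : 0 < t) : 0 < Del m₁ m₂ t := by
  rw [Del]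
  positivity

lemma Del_eq_sinh_two_mul :
    Del m₁ m₂ t = (2 * Real.sinh t) ^ m₁ * (2 * Real.sinh (2 * t)) ^ m₂ := by
  rw [Del, Real.sinh_two_mul, pow_add, mul_assoc, ← mul_pow]
  ring

lemma Del_mul_exp_le {s : ℝ} (ht : 0 < t) (hts : t ≤ s) :
    Del m₁ m₂ t * Real.exp (2 * rho m₁ m₂ * (s - t)) ≤ Del m₁ m₂ s := by
  have hexp : Real.exp (2 * rho m₁ m₂ * (s - t)) =
      Real.exp (s - t) ^ m₁ * Real.exp (2 * (s - t)) ^ m₂ := by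
    rw [← Real.exp_nat_mul, ← Real.exp_nat_mul, ← Real.exp_add, rho]
    congr 1
    ring
  have hsinh : 2 * Real.sinh t * Real.exp (s - t) ≤ 2 * Real.sinh s := by
    have := sinh_mul_exp_le (t := t) (sub_nonneg.2 hts)
    rw [add_sub_cancel] at this
    linarith
  have hsinh_two :
      2 * Real.sinh (2 * t) * Real.exp (2 * (s - t)) ≤ 2 * Real.sinh (2 * s) := by
    have := sinh_mul_exp_le (t := 2 * t) (d := 2 * (s - t)) (by linarith)
    rw [← mul_add, add_sub_cancel] at this
    linarith
  have hs := Real.sinh_pos_iff.2 (ht.trans_le hts)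
  rw [Del_eq_sinh_two_mul, Del_eq_sinh_two_mul, hexp, mul_mul_mul_comm, ← mul_pow, ← mul_pow]
  gcongr

lemma Del_le_two_mul_cosh_rpow (ht : 0 ≤ t) :
    Del m₁ m₂ t ≤ (2 * Real.cosh t) ^ (2 * rho m₁ m₂) := by
  have hρ : 2 * rho m₁ m₂ = ((m₁ + m₂ + m₂ : ℕ) : ℝ) := by
    rw [rho]
    push_cast
    ring
  rw [hρ, Real.rpow_natCast, pow_add, Del]
  gcongr
  exact (Real.sinh_lt_cosh t).le

lemma logDeriv_Del (ht : 0 < t) :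
    logDeriv (Del m₁ m₂) t = (m₁ + m₂) / Real.tanh t + m₂ * Real.tanh t := by
  have hDel : Del m₁ m₂ = fun s =>
      (2 * Real.sinh s) ^ (m₁ + m₂) * (2 * Real.cosh s) ^ m₂ := rfl
  rw [hDel, logDeriv_mul t (by positivity) (by positivity) (by fun_prop) (by fun_prop),
    logDeriv_fun_pow (by fun_prop), logDeriv_fun_pow (by fun_prop),
    logDeriv_const_mul t 2 two_ne_zero, logDeriv_const_mul t 2 two_ne_zero, Real.logDeriv_cosh,
    logDeriv_apply, Real.deriv_sinh, Real.tanh_eq_sinh_div_cosh]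
  push_cast
  field_simp

lemma hasDerivAt_Del (ht : 0 < t) :
    HasDerivAt (Del m₁ m₂) (logDeriv (Del m₁ m₂) t * Del m₁ m₂ t) t := by
  have hdiff : DifferentiableAt ℝ (Del m₁ m₂) t := by
    unfold Del
    fun_prop
  rw [logDeriv_apply, div_mul_cancel₀ _ (Del_pos ht).ne']
  exact hdiff.hasDerivAt

lemma logDeriv_Del_mul_tanh (ht : 0 < t) :
    logDeriv (Del m₁ m₂) t * Real.tanh t = m₁ + m₂ + m₂ * Real.tanh t ^ 2 := by
  rw [logDeriv_Del ht]
  have := (tanh_pos ht).ne'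
  field_simp

lemma two_mul_rho_mul_tanh_le_logDeriv_Del (ht : 0 < t) :
    2 * rho m₁ m₂ * Real.tanh t ≤ logDeriv (Del m₁ m₂) t := by
  have htanh : Real.tanh t ≤ 1 / Real.tanh t := by
    rw [le_div_iff₀ (tanh_pos ht), ← sq]
    exact (Real.tanh_sq_lt_one t).le
  rw [logDeriv_Del ht, rho, div_eq_mul_one_div _ (Real.tanh t)]
  calc 2 * ((m₁ + 2 * m₂) / 2) * Real.tanh t = (m₁ + m₂) * Real.tanh t + m₂ * Real.tanh t := by ring
    _ ≤ _ := by gcongr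

end Density

section Energy

/-- `u` solves the Jacobi equation `u'' + (Δ'/Δ) u' + (ρ² - μ²) u = 0` on `(0, ∞)`, with derivative
`u'`; the spectral parameter of the radial Laplacian is `λ = iμ`. -/
structure IsJacobiSolution (m₁ m₂ : ℕ) (μ : ℂ) (u u' : ℝ → ℂ) : Prop where
  hasDerivAt : ∀ t > 0, HasDerivAt u (u' t) t
  hasDerivAt_deriv : ∀ t > 0, HasDerivAt u'
    (-((logDeriv (Del m₁ m₂) t : ℝ) : ℂ) * u' t - ((rho m₁ m₂ : ℂ) ^ 2 - μ ^ 2) * u t) t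

/-- The derivative `u' + ρ tanh(t) u` of a solution, gauged by its expected decay
`(cosh t)^(-ρ)`. -/
def gaugedDeriv (m₁ m₂ : ℕ) (u u' : ℝ → ℂ) (t : ℝ) : ℂ :=
  u' t + (rho m₁ m₂ * Real.tanh t : ℝ) * u t

/-- The energy of a solution of the Jacobi equation, built from its gauged derivative. -/
def jacobiEnergy (m₁ m₂ : ℕ) (μ : ℂ) (u u' : ℝ → ℂ) (t : ℝ) : ℝ :=
  ‖gaugedDeriv m₁ m₂ u u' t‖ ^ 2 + ‖μ‖ ^ 2 * ‖u t‖ ^ 2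

/-- The potential `ρ (m₁/2 + 1) / cosh² t` left over in the equation of the gauged derivative. -/
def gaugePotential (m₁ m₂ : ℕ) (t : ℝ) : ℝ :=
  rho m₁ m₂ * (m₁ / 2 + 1) * (1 - Real.tanh t ^ 2)

/-- The exponent that compensates the growth and decay of the energy. -/
def energyPhase (m₁ m₂ : ℕ) (μ : ℂ) (t : ℝ) : ℝ :=
  2 * rho m₁ m₂ * Real.log (Real.cosh t) - 2 * |μ.re| * t
    - rho m₁ m₂ * (m₁ / 2 + 1) / ‖μ‖ * Real.tanh t

/-- A bound, for `‖μ‖ ≥ r`, on how far the energy phase stays below its slope at infinity. -/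
def phaseDefect (m₁ m₂ : ℕ) (r : ℝ) : ℝ :=
  2 * rho m₁ m₂ * Real.log 2 + rho m₁ m₂ * (m₁ / 2 + 1) / r

variable {m₁ m₂ : ℕ} {μ : ℂ} {u u' : ℝ → ℂ} {t : ℝ}

local notation "⟪" x ", " y "⟫" => inner ℝ x y

lemma gaugePotential_nonneg : 0 ≤ gaugePotential m₁ m₂ t := by
  have htanh : 0 ≤ 1 - Real.tanh t ^ 2 := sub_nonneg.2 (Real.tanh_sq_lt_one t).le
  have hρ := rho_nonneg (m₁ := m₁) (m₂ := m₂)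
  rw [gaugePotential]
  positivity

lemma gaugePotential_eq (ht : 0 < t) :
    gaugePotential m₁ m₂ t =
      (logDeriv (Del m₁ m₂) t - rho m₁ m₂ * Real.tanh t) * (rho m₁ m₂ * Real.tanh t)
        - rho m₁ m₂ ^ 2 + rho m₁ m₂ * (1 - Real.tanh t ^ 2) := by
  rw [gaugePotential]
  linear_combination (-rho m₁ m₂) * logDeriv_Del_mul_tanh (m₁ := m₁) (m₂ := m₂) ht
    + rho m₁ m₂ * (1 + Real.tanh t ^ 2) * (by rw [rho]; ring : rho m₁ m₂ = m₁ / 2 + m₂)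

lemma IsJacobiSolution.hasDerivAt_gaugedDeriv (h : IsJacobiSolution m₁ m₂ μ u u') (ht : 0 < t) :
    HasDerivAt (gaugedDeriv m₁ m₂ u u')
      ((-(logDeriv (Del m₁ m₂) t - rho m₁ m₂ * Real.tanh t) : ℝ) * gaugedDeriv m₁ m₂ u u' t
        + (gaugePotential m₁ m₂ t + μ ^ 2) * u t) t := by
  have hgauge := ((hasDerivAt_tanh t).const_mul (rho m₁ m₂)).ofReal_comp
  convert! (h.hasDerivAt_deriv t ht).add (hgauge.mul (h.hasDerivAt t ht)) using 1
  rw [gaugedDeriv, gaugePotential_eq ht]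
  simp only [ofReal_neg, ofReal_sub, ofReal_mul, ofReal_add, ofReal_pow, ofReal_one]
  ring

lemma sq_add_norm_sq (μ : ℂ) : μ ^ 2 + (‖μ‖ : ℂ) ^ 2 = 2 * μ.re * μ := by
  have hnorm : (‖μ‖ : ℂ) ^ 2 = μ * starRingEnd ℂ μ := by
    rw [mul_conj, normSq_eq_norm_sq, ofReal_pow]
  have hre : μ + starRingEnd ℂ μ = 2 * μ.re := by
    rw [add_conj, ofReal_mul, ofReal_ofNat]
  linear_combination hnorm + μ * hre

lemma IsJacobiSolution.hasDerivAt_jacobiEnergy (h : IsJacobiSolution m₁ m₂ μ u u') (ht : 0 < t) :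
    HasDerivAt (jacobiEnergy m₁ m₂ μ u u')
      (-2 * (logDeriv (Del m₁ m₂) t - rho m₁ m₂ * Real.tanh t)
            * ‖gaugedDeriv m₁ m₂ u u' t‖ ^ 2
          - 2 * (rho m₁ m₂ * Real.tanh t) * (‖μ‖ ^ 2 * ‖u t‖ ^ 2)
        + 2 * ⟪gaugedDeriv m₁ m₂ u u' t, (gaugePotential m₁ m₂ t + 2 * μ.re * μ) * u t⟫) t := by
  convert! (h.hasDerivAt_gaugedDeriv ht).norm_sq.add
    ((h.hasDerivAt t ht).norm_sq.const_mul (‖μ‖ ^ 2)) using 1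
  set v := gaugedDeriv m₁ m₂ u u' t with hv
  have hu' : u' t = v - (rho m₁ m₂ * Real.tanh t) • u t := by
    rw [hv, gaugedDeriv, real_smul, add_sub_cancel_right]
  have hcross : ((gaugePotential m₁ m₂ t : ℂ) + 2 * μ.re * μ) * u t =
      (gaugePotential m₁ m₂ t + μ ^ 2) * u t + (‖μ‖ ^ 2) • u t := by
    rw [← sq_add_norm_sq, real_smul, ofReal_pow]
    ring
  rw [hu', hcross, ← real_smul]
  simp only [inner_add_right, inner_sub_right, real_inner_smul_right, real_inner_self_eq_norm_sq,
    real_inner_comm v (u t)]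
  ring

lemma abs_two_mul_inner_le (hμ : μ ≠ 0) {g : ℝ} (hg : 0 ≤ g) (v w : ℂ) :
    |2 * ⟪v, (g + 2 * μ.re * μ) * w⟫| ≤
      (g / ‖μ‖ + 2 * |μ.re|) * (‖v‖ ^ 2 + ‖μ‖ ^ 2 * ‖w‖ ^ 2) := by
  have hcoeff : ‖(g : ℂ) + 2 * μ.re * μ‖ ≤ g + 2 * |μ.re| * ‖μ‖ := by
    refine (norm_add_le _ _).trans_eq ?_
    simp [abs_of_nonneg hg]
  calc |2 * ⟪v, (g + 2 * μ.re * μ) * w⟫|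
      = 2 * |⟪v, (g + 2 * μ.re * μ) * w⟫| := by rw [abs_mul, abs_two]
    _ ≤ 2 * (‖v‖ * (‖(g : ℂ) + 2 * μ.re * μ‖ * ‖w‖)) := by
        rw [← norm_mul]
        gcongr
        exact abs_real_inner_le_norm _ _
    _ ≤ 2 * (‖v‖ * ((g + 2 * |μ.re| * ‖μ‖) * ‖w‖)) := by gcongr
    _ = (g / ‖μ‖ + 2 * |μ.re|) * (2 * ‖v‖ * (‖μ‖ * ‖w‖)) := by field_simp
    _ ≤ (g / ‖μ‖ + 2 * |μ.re|) * (‖v‖ ^ 2 + (‖μ‖ * ‖w‖) ^ 2) := by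
        gcongr
        exact two_mul_le_add_sq _ _
    _ = _ := by rw [mul_pow]

lemma hasDerivAt_energyPhase :
    HasDerivAt (energyPhase m₁ m₂ μ)
      (2 * rho m₁ m₂ * Real.tanh t - 2 * |μ.re| - gaugePotential m₁ m₂ t / ‖μ‖) t := by
  convert! (((hasDerivAt_log_cosh t).const_mul (2 * rho m₁ m₂)).sub
    (hasDerivAt_const_mul (2 * |μ.re|))).sub
      ((hasDerivAt_tanh t).const_mul (rho m₁ m₂ * (m₁ / 2 + 1) / ‖μ‖)) using 1
  rw [gaugePotential]
  ring

lemma IsJacobiSolution.antitoneOn_jacobiEnergy_mul_exp (h : IsJacobiSolution m₁ m₂ μ u u')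
    (hμ : μ ≠ 0) :
    AntitoneOn (fun t => jacobiEnergy m₁ m₂ μ u u' t * Real.exp (energyPhase m₁ m₂ μ t))
      (Ioi 0) := by
  refine antitoneOn_Ioi_mul_of_le_neg_mul
    (k := fun t => 2 * rho m₁ m₂ * Real.tanh t - 2 * |μ.re| - gaugePotential m₁ m₂ t / ‖μ‖)
    (fun t => h.hasDerivAt_jacobiEnergy)
    (fun t _ => (hasDerivAt_energyPhase.exp).congr_deriv (mul_comm _ _))
    (fun t _ => (Real.exp_pos _).le) fun t ht => ?_
  have hcross := (abs_le.1 (abs_two_mul_inner_le hμ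
    (gaugePotential_nonneg (m₁ := m₁) (m₂ := m₂) (t := t))
    (gaugedDeriv m₁ m₂ u u' t) (u t))).2
  have hrate := mul_nonneg (sub_nonneg.2
    (two_mul_rho_mul_tanh_le_logDeriv_Del (m₁ := m₁) (m₂ := m₂) ht))
    (sq_nonneg ‖gaugedDeriv m₁ m₂ u u' t‖)
  rw [jacobiEnergy]
  linarith

lemma IsJacobiSolution.monotoneOn_jacobiEnergy_mul_Del_sq (h : IsJacobiSolution m₁ m₂ μ u u')
    (hμ : μ ≠ 0) :
    MonotoneOn (fun t => jacobiEnergy m₁ m₂ μ u u' t *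
      (Del m₁ m₂ t ^ 2 * Real.exp (-energyPhase m₁ m₂ μ t))) (Ioi 0) := by
  refine monotoneOn_Ioi_mul_of_neg_mul_le (k := fun t => 2 * logDeriv (Del m₁ m₂) t
      - (2 * rho m₁ m₂ * Real.tanh t - 2 * |μ.re| - gaugePotential m₁ m₂ t / ‖μ‖))
    (fun t => h.hasDerivAt_jacobiEnergy) (fun t ht => ?_) (fun t _ => by positivity) fun t ht => ?_
  · convert! ((hasDerivAt_Del ht).pow 2).mul (hasDerivAt_energyPhase (μ := μ)).neg.exp using 1
    simp only [Pi.pow_apply, Pi.neg_apply]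
    ring
  · have hcross := (abs_le.1 (abs_two_mul_inner_le hμ
      (gaugePotential_nonneg (m₁ := m₁) (m₂ := m₂) (t := t)) (gaugedDeriv m₁ m₂ u u' t) (u t))).1
    have hrate := mul_nonneg (sub_nonneg.2
      (two_mul_rho_mul_tanh_le_logDeriv_Del (m₁ := m₁) (m₂ := m₂) ht))
      (by positivity : 0 ≤ ‖μ‖ ^ 2 * ‖u t‖ ^ 2)
    rw [jacobiEnergy]
    linarith

lemma energyPhase_zero : energyPhase m₁ m₂ μ 0 = 0 := by
  simp [energyPhase]

lemma continuous_energyPhase : Continuous (energyPhase m₁ m₂ μ) :=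
  continuous_iff_continuousAt.2 fun _ => hasDerivAt_energyPhase.continuousAt

lemma energyPhase_le (ht : 0 < t) : energyPhase m₁ m₂ μ t ≤ 2 * (rho m₁ m₂ - |μ.re|) * t := by
  have hρ := rho_nonneg (m₁ := m₁) (m₂ := m₂)
  have hlog : 2 * rho m₁ m₂ * Real.log (Real.cosh t) ≤ 2 * rho m₁ m₂ * t := by
    gcongr
    exact log_cosh_le ht.le
  have htanh : 0 ≤ rho m₁ m₂ * (m₁ / 2 + 1) / ‖μ‖ * Real.tanh t := by
    have := tanh_pos ht
    positivity
  rw [energyPhase]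
  linarith

lemma energyPhase_ge {r : ℝ} (hr : 0 < r) (hμ : r ≤ ‖μ‖) :
    2 * rho m₁ m₂ * Real.log (2 * Real.cosh t) - 2 * |μ.re| * t - phaseDefect m₁ m₂ r ≤
      energyPhase m₁ m₂ μ t := by
  have hρ := rho_nonneg (m₁ := m₁) (m₂ := m₂)
  have htanh : rho m₁ m₂ * (m₁ / 2 + 1) / ‖μ‖ * Real.tanh t ≤ rho m₁ m₂ * (m₁ / 2 + 1) / r :=
    calc rho m₁ m₂ * (m₁ / 2 + 1) / ‖μ‖ * Real.tanh t
        ≤ rho m₁ m₂ * (m₁ / 2 + 1) / ‖μ‖ :=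
          mul_le_of_le_one_right (by positivity) (Real.tanh_lt_one t).le
      _ ≤ _ := by gcongr
  rw [energyPhase, phaseDefect, Real.log_mul two_ne_zero (Real.cosh_pos t).ne']
  linarith

lemma Del_sq_mul_exp_neg_energyPhase_le {r : ℝ} (hr : 0 < r) (hμ : r ≤ ‖μ‖) (ht : 0 < t) :
    Del m₁ m₂ t ^ 2 * Real.exp (-energyPhase m₁ m₂ μ t) ≤
      Real.exp (phaseDefect m₁ m₂ r) * (2 * Real.cosh t) ^ (2 * (rho m₁ m₂ + |μ.re|)) := by
  have hcosh : 0 < 2 * Real.cosh t := mul_pos two_pos (Real.cosh_pos t)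
  have hphase : -energyPhase m₁ m₂ μ t ≤
      phaseDefect m₁ m₂ r + Real.log (2 * Real.cosh t) * (2 * (|μ.re| - rho m₁ m₂)) := by
    have hlower := energyPhase_ge (m₁ := m₁) (m₂ := m₂) (t := t) hr hμ
    have hlog := mul_le_mul_of_nonneg_left (le_log_two_mul_cosh t) (abs_nonneg μ.re)
    linarith
  calc Del m₁ m₂ t ^ 2 * Real.exp (-energyPhase m₁ m₂ μ t)
      ≤ ((2 * Real.cosh t) ^ (2 * rho m₁ m₂)) ^ 2 * (Real.exp (phaseDefect m₁ m₂ r) *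
          (2 * Real.cosh t) ^ (2 * (|μ.re| - rho m₁ m₂))) := by
        rw [Real.rpow_def_of_pos hcosh (2 * (|μ.re| - rho m₁ m₂)), ← Real.exp_add]
        have := (Del_pos (m₁ := m₁) (m₂ := m₂) ht).le
        gcongr
        exact Del_le_two_mul_cosh_rpow ht.le
    _ = _ := by
        rw [mul_left_comm, ← Real.rpow_natCast, ← Real.rpow_mul hcosh.le, ← Real.rpow_add hcosh]
        congr 2
        push_cast
        ring

lemma IsJacobiSolution.jacobiEnergy_mul_exp_le (h : IsJacobiSolution m₁ m₂ μ u u') (hμ : μ ≠ 0)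
    (hu : ContinuousAt u 0) (hu' : ContinuousAt u' 0) (ht : 0 < t) :
    jacobiEnergy m₁ m₂ μ u u' t * Real.exp (energyPhase m₁ m₂ μ t) ≤
      jacobiEnergy m₁ m₂ μ u u' 0 := by
  have htanh : ContinuousAt Real.tanh 0 := (hasDerivAt_tanh 0).continuousAt
  have hphase : ContinuousAt (energyPhase m₁ m₂ μ) 0 := continuous_energyPhase.continuousAt
  have hcont : ContinuousAt
      (fun s => jacobiEnergy m₁ m₂ μ u u' s * Real.exp (energyPhase m₁ m₂ μ s)) 0 := by
    unfold jacobiEnergy gaugedDeriv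
    fun_prop
  have hlim : Tendsto (fun s => jacobiEnergy m₁ m₂ μ u u' s * Real.exp (energyPhase m₁ m₂ μ s))
      (𝓝[>] 0) (𝓝 (jacobiEnergy m₁ m₂ μ u u' 0)) := by
    simpa [energyPhase_zero] using! hcont.tendsto.mono_left nhdsWithin_le_nhds
  refine ge_of_tendsto hlim ?_
  filter_upwards [Ioo_mem_nhdsGT ht] with s hs
  exact h.antitoneOn_jacobiEnergy_mul_exp hμ hs.1 ht hs.2.le

lemma IsJacobiSolution.norm_mul_exp_le (h : IsJacobiSolution m₁ m₂ μ u u') (hμ : μ ≠ 0)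
    (hu : ContinuousAt u 0) (hu' : ContinuousAt u' 0) (hu₀ : u 0 = 1) (hu'₀ : u' 0 = 0)
    (ht : 0 < t) : ‖u t‖ * Real.exp (energyPhase m₁ m₂ μ t / 2) ≤ 1 := by
  have henergy := h.jacobiEnergy_mul_exp_le hμ hu hu' ht
  simp only [jacobiEnergy, gaugedDeriv, hu₀, hu'₀, Real.tanh_zero, mul_zero, ofReal_zero,
    add_zero, norm_zero, norm_one, one_pow, mul_one, zero_add, ne_eq, OfNat.ofNat_ne_zero,
    not_false_eq_true, zero_pow] at henergy
  refine (sq_le_one_iff₀ (by positivity)).1 (le_of_mul_le_mul_left ?_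
    (pow_pos (norm_pos_iff.2 hμ) 2))
  rw [mul_pow, Real.exp_half, Real.sq_sqrt (Real.exp_pos _).le, mul_one, ← mul_assoc]
  refine le_trans ?_ henergy
  gcongr
  exact le_add_of_nonneg_left (sq_nonneg _)

lemma IsJacobiSolution.jacobiEnergy_mul_Del_sq_le (h : IsJacobiSolution m₁ m₂ μ u u') {r M : ℝ}
    (hr : 0 < r) (hμ : r ≤ ‖μ‖)
    (hlim : Tendsto (fun s => jacobiEnergy m₁ m₂ μ u u' s *
      (2 * Real.cosh s) ^ (2 * (rho m₁ m₂ + |μ.re|))) atTop (𝓝 M)) (ht : 0 < t) :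
    jacobiEnergy m₁ m₂ μ u u' t * (Del m₁ m₂ t ^ 2 * Real.exp (-energyPhase m₁ m₂ μ t)) ≤
      Real.exp (phaseDefect m₁ m₂ r) * M := by
  refine ge_of_tendsto (hlim.const_mul _) ?_
  filter_upwards [eventually_ge_atTop t] with s hs
  have hs₀ : 0 < s := ht.trans_le hs
  refine (h.monotoneOn_jacobiEnergy_mul_Del_sq (norm_pos_iff.1 (hr.trans_le hμ)) ht hs₀
    hs).trans ?_
  rw [mul_left_comm]
  refine mul_le_mul_of_nonneg_left (Del_sq_mul_exp_neg_energyPhase_le hr hμ hs₀) ?_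
  rw [jacobiEnergy]
  positivity

lemma IsJacobiSolution.norm_mul_Del_mul_exp_le (h : IsJacobiSolution m₁ m₂ μ u u') {r : ℝ}
    (hr : 0 < r) (hμ : r ≤ ‖μ‖)
    (hlim : Tendsto (fun s => jacobiEnergy m₁ m₂ μ u u' s *
      (2 * Real.cosh s) ^ (2 * (rho m₁ m₂ + |μ.re|))) atTop (𝓝 (2 * ‖μ‖ ^ 2))) (ht : 0 < t) :
    ‖u t‖ * Del m₁ m₂ t * Real.exp (-energyPhase m₁ m₂ μ t / 2) ≤
      √2 * Real.exp (phaseDefect m₁ m₂ r / 2) := by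
  rw [Real.exp_half, Real.exp_half, ← Real.sqrt_mul zero_le_two]
  refine Real.le_sqrt_of_sq_le (le_of_mul_le_mul_left ?_ (pow_pos (hr.trans_le hμ) 2))
  rw [mul_pow, mul_pow, Real.sq_sqrt (Real.exp_pos _).le]
  calc ‖μ‖ ^ 2 * (‖u t‖ ^ 2 * Del m₁ m₂ t ^ 2 * Real.exp (-energyPhase m₁ m₂ μ t))
      = ‖μ‖ ^ 2 * ‖u t‖ ^ 2 * (Del m₁ m₂ t ^ 2 * Real.exp (-energyPhase m₁ m₂ μ t)) := by ring
    _ ≤ jacobiEnergy m₁ m₂ μ u u' t *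
          (Del m₁ m₂ t ^ 2 * Real.exp (-energyPhase m₁ m₂ μ t)) := by
        gcongr
        exact le_add_of_nonneg_left (sq_nonneg _)
    _ ≤ Real.exp (phaseDefect m₁ m₂ r) * (2 * ‖μ‖ ^ 2) :=
        h.jacobiEnergy_mul_Del_sq_le hr hμ hlim ht
    _ = ‖μ‖ ^ 2 * (2 * Real.exp (phaseDefect m₁ m₂ r)) := by ring

end Energy

section Ansatz

/-- The function `(b cosh t)^(-κ) G(tanh² t)`; both `φ_λ` and `Φ_λ` have this form. -/
def jacobiAnsatz (b : ℝ) (κ : ℂ) (G : ℂ → ℂ) (t : ℝ) : ℂ :=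
  ((b * Real.cosh t : ℝ) : ℂ) ^ (-κ) * G ((Real.tanh t ^ 2 : ℝ) : ℂ)

/-- The operator `G ↦ 2 (1 - y) G' - κ G`, which expresses differentiation of `jacobiAnsatz b κ G`
in terms of the profile `G`. -/
def jacobiFlux (κ : ℂ) (G : ℂ → ℂ) (y : ℂ) : ℂ :=
  2 * (1 - y) * deriv G y - κ * G y

variable {m₁ m₂ : ℕ} {b t : ℝ} {κ μ : ℂ} {G : ℂ → ℂ}

lemma norm_ofReal_tanh_sq_lt_one : ‖((Real.tanh t ^ 2 : ℝ) : ℂ)‖ < 1 := by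
  rw [norm_real, Real.norm_of_nonneg (sq_nonneg _)]
  exact Real.tanh_sq_lt_one t

lemma norm_one_sub_ofReal_tanh_sq_lt_one (ht : 0 < t) :
    ‖1 - ((Real.tanh t ^ 2 : ℝ) : ℂ)‖ < 1 := by
  rw [← ofReal_one, ← ofReal_sub, norm_real,
    Real.norm_of_nonneg (sub_nonneg.2 (Real.tanh_sq_lt_one t).le)]
  exact sub_lt_self 1 (pow_pos (tanh_pos ht) 2)

lemma hasDerivAt_ofReal_tanh :
    HasDerivAt (fun s : ℝ => (Real.tanh s : ℂ)) (1 - ((Real.tanh t ^ 2 : ℝ) : ℂ)) t := by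
  simpa only [ofReal_sub, ofReal_one] using! (hasDerivAt_tanh t).ofReal_comp

lemma hasDerivAt_comp_tanh_sq (hG : DifferentiableAt ℂ G ((Real.tanh t ^ 2 : ℝ) : ℂ)) :
    HasDerivAt (fun s : ℝ => G ((Real.tanh s ^ 2 : ℝ) : ℂ))
      (Real.tanh t * (2 * (1 - ((Real.tanh t ^ 2 : ℝ) : ℂ))
        * deriv G ((Real.tanh t ^ 2 : ℝ) : ℂ))) t := by
  have hsq := ((hasDerivAt_tanh t).pow 2).ofReal_comp
  convert! HasDerivAt.comp t (h := fun s : ℝ => ((Real.tanh s ^ 2 : ℝ) : ℂ)) hG.hasDerivAt hsq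
    using 1
  simp only [ofReal_mul, ofReal_sub, ofReal_one, Nat.cast_ofNat, ofReal_ofNat, Nat.add_one_sub_one,
    pow_one]
  ring

lemma hasDerivAt_cosh_cpow (hb : 0 < b) :
    HasDerivAt (fun s : ℝ => ((b * Real.cosh s : ℝ) : ℂ) ^ (-κ))
      (-κ * Real.tanh t * ((b * Real.cosh t : ℝ) : ℂ) ^ (-κ)) t := by
  have hpos : 0 < b * Real.cosh t := mul_pos hb (Real.cosh_pos t)
  have hbase :
      HasDerivAt (fun s : ℝ => ((b * Real.cosh s : ℝ) : ℂ)) ((b * Real.sinh t : ℝ) : ℂ) t :=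
    ((Real.hasDerivAt_cosh t).const_mul b).ofReal_comp
  convert! HasDerivAt.comp t (h := fun s : ℝ => ((b * Real.cosh s : ℝ) : ℂ))
    ((hasDerivAt_id' _).cpow_const (c := -κ) (ofReal_mem_slitPlane.2 hpos)) hbase using 1
  have hcosh : (Real.cosh t : ℂ) ≠ 0 := ofReal_ne_zero.2 (Real.cosh_pos t).ne'
  have hb' : (b : ℂ) ≠ 0 := ofReal_ne_zero.2 hb.ne'
  rw [cpow_sub _ _ (ofReal_ne_zero.2 hpos.ne'), cpow_one, Real.tanh_eq_sinh_div_cosh]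
  simp only [ofReal_mul, ofReal_div]
  field_simp

lemma hasDerivAt_jacobiAnsatz (hb : 0 < b)
    (hG : DifferentiableAt ℂ G ((Real.tanh t ^ 2 : ℝ) : ℂ)) :
    HasDerivAt (jacobiAnsatz b κ G) (Real.tanh t * jacobiAnsatz b κ (jacobiFlux κ G) t) t := by
  convert! (hasDerivAt_cosh_cpow (κ := κ) hb).mul (hasDerivAt_comp_tanh_sq hG) using 1
  rw [jacobiAnsatz, jacobiFlux]
  ring

lemma analyticAt_jacobiFlux {y : ℂ} (hG : AnalyticAt ℂ G y) : AnalyticAt ℂ (jacobiFlux κ G) y := by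
  unfold jacobiFlux
  fun_prop

lemma jacobiFlux_jacobiFlux {y : ℂ} (hG : AnalyticAt ℂ G y) :
    jacobiFlux κ (jacobiFlux κ G) y =
      2 * (1 - y) * (2 * (1 - y) * deriv (deriv G) y - (2 + κ) * deriv G y)
        - κ * jacobiFlux κ G y := by
  have hderiv : HasDerivAt (jacobiFlux κ G)
      (2 * -1 * deriv G y + 2 * (1 - y) * deriv (deriv G) y - κ * deriv G y) y :=
    ((((hasDerivAt_id' y).const_sub 1).const_mul 2).mul hG.deriv.differentiableAt.hasDerivAt).sub
      (hG.differentiableAt.hasDerivAt.const_mul κ)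
  rw [jacobiFlux, hderiv.deriv]
  ring

lemma jacobiFlux_eq_gaussOperator {y : ℂ} (hG : AnalyticAt ℂ G y) :
    (1 - y + (m₁ + m₂ + m₂ * y)) * jacobiFlux (rho m₁ m₂ + μ) G y
        + y * jacobiFlux (rho m₁ m₂ + μ) (jacobiFlux (rho m₁ m₂ + μ) G) y
        + (rho m₁ m₂ ^ 2 - μ ^ 2) * G y =
      4 * (1 - y) * gaussOperator ((m₁ + 2) / 4 + μ / 2) ((rho m₁ m₂ + μ) / 2)
        ((m₁ + m₂ + 1) / 2) G y := by
  have hρ : (rho m₁ m₂ : ℂ) = (m₁ + 2 * m₂) / 2 := by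
    rw [rho]
    push_cast
    rfl
  rw [jacobiFlux_jacobiFlux hG, gaussOperator, jacobiFlux, hρ]
  ring

lemma isJacobiSolution_jacobiAnsatz (hb : 0 < b)
    (hG : ∀ t > 0, AnalyticAt ℂ G ((Real.tanh t ^ 2 : ℝ) : ℂ))
    (hode : ∀ t > 0, gaussOperator ((m₁ + 2) / 4 + μ / 2) ((rho m₁ m₂ + μ) / 2)
        ((m₁ + m₂ + 1) / 2) G ((Real.tanh t ^ 2 : ℝ) : ℂ) = 0) :
    IsJacobiSolution m₁ m₂ μ (jacobiAnsatz b (rho m₁ m₂ + μ) G)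
      (fun t => Real.tanh t * jacobiAnsatz b (rho m₁ m₂ + μ)
        (jacobiFlux (rho m₁ m₂ + μ) G) t) where
  hasDerivAt t ht := hasDerivAt_jacobiAnsatz hb (hG t ht).differentiableAt
  hasDerivAt_deriv t ht := by
    have hderiv := hasDerivAt_ofReal_tanh.mul (hasDerivAt_jacobiAnsatz (κ := rho m₁ m₂ + μ) hb
      (analyticAt_jacobiFlux (κ := rho m₁ m₂ + μ) (hG t ht)).differentiableAt)
    have hDel : ((logDeriv (Del m₁ m₂) t : ℝ) : ℂ) * Real.tanh t =
        m₁ + m₂ + m₂ * ((Real.tanh t ^ 2 : ℝ) : ℂ) := by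
      exact_mod_cast congrArg ((↑) : ℝ → ℂ) (logDeriv_Del_mul_tanh ht)
    have hgauss := jacobiFlux_eq_gaussOperator (m₁ := m₁) (m₂ := m₂) (μ := μ) (hG t ht)
    rw [hode t ht, mul_zero] at hgauss
    convert! hderiv using 1
    simp only [jacobiAnsatz]
    have hsq : (Real.tanh t : ℂ) * Real.tanh t = ((Real.tanh t ^ 2 : ℝ) : ℂ) := by
      rw [← ofReal_mul, sq]
    set w := ((b * Real.cosh t : ℝ) : ℂ) ^ (-(rho m₁ m₂ + μ))
    set κ := rho m₁ m₂ + μ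
    linear_combination -w * hgauss - w * jacobiFlux κ G ((Real.tanh t ^ 2 : ℝ) : ℂ) * hDel
      - w * jacobiFlux κ (jacobiFlux κ G) ((Real.tanh t ^ 2 : ℝ) : ℂ) * hsq

lemma norm_jacobiAnsatz (hb : 0 < b) :
    ‖jacobiAnsatz b κ G t‖ = (b * Real.cosh t) ^ (-κ.re) * ‖G ((Real.tanh t ^ 2 : ℝ) : ℂ)‖ := by
  rw [jacobiAnsatz, norm_mul, norm_cpow_eq_rpow_re_of_pos (mul_pos hb (Real.cosh_pos t)), neg_re]

lemma gaugedDeriv_jacobiAnsatz :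
    gaugedDeriv m₁ m₂ (jacobiAnsatz b (rho m₁ m₂ + μ) G)
      (fun t => Real.tanh t * jacobiAnsatz b (rho m₁ m₂ + μ)
        (jacobiFlux (rho m₁ m₂ + μ) G) t) t =
      Real.tanh t * jacobiAnsatz b (rho m₁ m₂ + μ) (jacobiFlux μ G) t := by
  simp only [gaugedDeriv, jacobiAnsatz, jacobiFlux, ofReal_mul]
  ring

lemma jacobiEnergy_jacobiAnsatz_mul_rpow (hb : 0 < b) :
    jacobiEnergy m₁ m₂ μ (jacobiAnsatz b (rho m₁ m₂ + μ) G)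
      (fun t => Real.tanh t * jacobiAnsatz b (rho m₁ m₂ + μ)
        (jacobiFlux (rho m₁ m₂ + μ) G) t) t * (b * Real.cosh t) ^ (2 * (rho m₁ m₂ + μ.re)) =
      Real.tanh t ^ 2 * ‖jacobiFlux μ G ((Real.tanh t ^ 2 : ℝ) : ℂ)‖ ^ 2
        + ‖μ‖ ^ 2 * ‖G ((Real.tanh t ^ 2 : ℝ) : ℂ)‖ ^ 2 := by
  have hcosh : 0 < b * Real.cosh t := mul_pos hb (Real.cosh_pos t)
  have hrpow : ((b * Real.cosh t) ^ (-(rho m₁ m₂ + μ.re))) ^ 2 *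
      (b * Real.cosh t) ^ (2 * (rho m₁ m₂ + μ.re)) = 1 := by
    rw [← Real.rpow_natCast, ← Real.rpow_mul hcosh.le, ← Real.rpow_add hcosh]
    convert Real.rpow_zero _ using 2
    push_cast
    ring
  rw [jacobiEnergy, gaugedDeriv_jacobiAnsatz, norm_mul, norm_real, Real.norm_eq_abs,
    norm_jacobiAnsatz hb, norm_jacobiAnsatz hb, add_re, ofReal_re, mul_pow, sq_abs]
  linear_combination (Real.tanh t ^ 2 * ‖jacobiFlux μ G ((Real.tanh t ^ 2 : ℝ) : ℂ)‖ ^ 2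
        + ‖μ‖ ^ 2 * ‖G ((Real.tanh t ^ 2 : ℝ) : ℂ)‖ ^ 2) * hrpow

lemma tendsto_jacobiEnergy_jacobiAnsatz_mul_rpow (hb : 0 < b) (hG : AnalyticAt ℂ G 1)
    (hG₁ : G 1 = 1) :
    Tendsto (fun t => jacobiEnergy m₁ m₂ μ (jacobiAnsatz b (rho m₁ m₂ + μ) G)
      (fun t => Real.tanh t * jacobiAnsatz b (rho m₁ m₂ + μ)
        (jacobiFlux (rho m₁ m₂ + μ) G) t) t * (b * Real.cosh t) ^ (2 * (rho m₁ m₂ + μ.re)))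
      atTop (𝓝 (2 * ‖μ‖ ^ 2)) := by
  simp only [jacobiEnergy_jacobiAnsatz_mul_rpow hb]
  have htanh : Tendsto (fun t => ((Real.tanh t ^ 2 : ℝ) : ℂ)) atTop (𝓝 1) := by
    simpa using! (tendsto_tanh_atTop.pow 2).ofReal
  have hflux := (analyticAt_jacobiFlux (κ := μ) hG).continuousAt.tendsto.comp htanh
  have hprofile := hG.continuousAt.tendsto.comp htanh
  convert! ((tendsto_tanh_atTop.pow 2).mul (hflux.norm.pow 2)).add
    ((hprofile.norm.pow 2).const_mul (‖μ‖ ^ 2)) using 2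
  simp [jacobiFlux, hG₁, two_mul]

end Ansatz

section Solutions

/-- The profile of `φ_λ` in `jacobiAnsatz`, as a function of `y = tanh² t`, where `μ = iλ`. -/
def sphProfile (m₁ m₂ : ℕ) (μ : ℂ) : ℂ → ℂ :=
  hyp ((m₁ + 2) / 4 + μ / 2) ((rho m₁ m₂ + μ) / 2) ((m₁ + m₂ + 1) / 2)

/-- The profile of `Φ_λ` in `jacobiAnsatz`, as a function of `y = tanh² t`, where `μ = -iλ`. -/
def PhiProfile (m₁ m₂ : ℕ) (μ y : ℂ) : ℂ :=
  hyp ((rho m₁ m₂ + μ) / 2) ((m₁ + 2) / 4 + μ / 2) (1 + μ) (1 - y)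

variable {m₁ m₂ : ℕ} {l μ y : ℂ} {t : ℝ}

lemma ne_neg_natCast_of_re_pos {c : ℂ} (hc : 0 < c.re) (k : ℕ) : c ≠ -k := by
  rintro rfl
  rw [neg_re, natCast_re] at hc
  linarith [k.cast_nonneg (α := ℝ)]

lemma natCast_add_add_one_div_two_re_pos : 0 < (((m₁ : ℂ) + m₂ + 1) / 2).re := by
  have hcast : ((m₁ : ℂ) + m₂ + 1) / 2 = (((m₁ + m₂ + 1) / 2 : ℝ) : ℂ) := by
    push_cast
    rfl
  rw [hcast, ofReal_re]
  positivity

lemma one_add_re_pos (hμ : 0 ≤ μ.re) : 0 < (1 + μ).re := by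
  rw [add_re, one_re]
  linarith

lemma sph_eq_jacobiAnsatz :
    sph m₁ m₂ l = jacobiAnsatz 1 (rho m₁ m₂ + I * l) (sphProfile m₁ m₂ (I * l)) := by
  ext t
  rw [sph, jacobiAnsatz, one_mul, sphProfile]

lemma Phi_eq_jacobiAnsatz :
    Phi m₁ m₂ l = jacobiAnsatz 2 (rho m₁ m₂ + -(I * l)) (PhiProfile m₁ m₂ (-(I * l))) := by
  ext t
  have hargument : (1 : ℂ) - ((Real.tanh t ^ 2 : ℝ) : ℂ) = ((Real.cosh t ^ 2 : ℝ) : ℂ)⁻¹ := by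
    rw [← ofReal_one, ← ofReal_sub, one_sub_tanh_sq, ofReal_inv]
  rw [Phi, jacobiAnsatz, PhiProfile, hargument]
  congr 2 <;> ring_nf

lemma analyticAt_sphProfile (hy : ‖y‖ < 1) : AnalyticAt ℂ (sphProfile m₁ m₂ μ) y :=
  analyticAt_hyp (ne_neg_natCast_of_re_pos natCast_add_add_one_div_two_re_pos) hy

lemma gaussOperator_sphProfile (hy : ‖y‖ < 1) :
    gaussOperator ((m₁ + 2) / 4 + μ / 2) ((rho m₁ m₂ + μ) / 2) ((m₁ + m₂ + 1) / 2)
      (sphProfile m₁ m₂ μ) y = 0 :=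
  gaussOperator_hyp (ne_neg_natCast_of_re_pos natCast_add_add_one_div_two_re_pos) hy

lemma analyticAt_PhiProfile (hμ : 0 ≤ μ.re) (hy : ‖1 - y‖ < 1) :
    AnalyticAt ℂ (PhiProfile m₁ m₂ μ) y :=
  AnalyticAt.fun_comp (g := hyp _ _ _)
    (analyticAt_hyp (ne_neg_natCast_of_re_pos (one_add_re_pos hμ)) hy) (by fun_prop)

lemma gaussOperator_PhiProfile (hμ : 0 ≤ μ.re) (hy : ‖1 - y‖ < 1) :
    gaussOperator ((m₁ + 2) / 4 + μ / 2) ((rho m₁ m₂ + μ) / 2) ((m₁ + m₂ + 1) / 2)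
      (PhiProfile m₁ m₂ μ) y = 0 := by
  have hc : ((m₁ : ℂ) + 2) / 4 + μ / 2 + (rho m₁ m₂ + μ) / 2 + 1 - (m₁ + m₂ + 1) / 2 = 1 + μ := by
    rw [rho]
    push_cast
    ring
  have hswap : gaussOperator ((m₁ + 2) / 4 + μ / 2) ((rho m₁ m₂ + μ) / 2) (1 + μ) =
      gaussOperator ((rho m₁ m₂ + μ) / 2) ((m₁ + 2) / 4 + μ / 2) (1 + μ) := by
    ext F x
    rw [gaussOperator, gaussOperator]
    ring
  unfold PhiProfile
  rw [gaussOperator_comp_one_sub, hc, hswap]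
  exact gaussOperator_hyp (ne_neg_natCast_of_re_pos (one_add_re_pos hμ)) hy

lemma isJacobiSolution_sph :
    IsJacobiSolution m₁ m₂ (I * l) (sph m₁ m₂ l) (fun t => Real.tanh t *
      jacobiAnsatz 1 (rho m₁ m₂ + I * l)
        (jacobiFlux (rho m₁ m₂ + I * l) (sphProfile m₁ m₂ (I * l))) t) := by
  rw [sph_eq_jacobiAnsatz]
  exact isJacobiSolution_jacobiAnsatz one_pos
    (fun _ _ => analyticAt_sphProfile norm_ofReal_tanh_sq_lt_one)
    (fun _ _ => gaussOperator_sphProfile norm_ofReal_tanh_sq_lt_one)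

lemma isJacobiSolution_Phi (hl : 0 ≤ l.im) :
    IsJacobiSolution m₁ m₂ (-(I * l)) (Phi m₁ m₂ l) (fun t => Real.tanh t *
      jacobiAnsatz 2 (rho m₁ m₂ + -(I * l))
        (jacobiFlux (rho m₁ m₂ + -(I * l)) (PhiProfile m₁ m₂ (-(I * l)))) t) := by
  rw [Phi_eq_jacobiAnsatz]
  exact isJacobiSolution_jacobiAnsatz two_pos
    (fun _ ht => analyticAt_PhiProfile (by simpa) (norm_one_sub_ofReal_tanh_sq_lt_one ht))
    (fun _ ht => gaussOperator_PhiProfile (by simpa) (norm_one_sub_ofReal_tanh_sq_lt_one ht))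

lemma hasDerivAt_sph : HasDerivAt (sph m₁ m₂ l) (Real.tanh t *
    jacobiAnsatz 1 (rho m₁ m₂ + I * l)
      (jacobiFlux (rho m₁ m₂ + I * l) (sphProfile m₁ m₂ (I * l))) t) t := by
  rw [sph_eq_jacobiAnsatz]
  exact hasDerivAt_jacobiAnsatz one_pos
    (analyticAt_sphProfile norm_ofReal_tanh_sq_lt_one).differentiableAt

lemma sph_zero : sph m₁ m₂ l 0 = 1 := by
  simp [sph, hyp_zero]

lemma norm_sph_mul_exp_le (hl : l ≠ 0) (ht : 0 < t) :
    ‖sph m₁ m₂ l t‖ * Real.exp (energyPhase m₁ m₂ (I * l) t / 2) ≤ 1 := by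
  have hderiv : ContinuousAt (fun t => (Real.tanh t : ℂ) * jacobiAnsatz 1 (rho m₁ m₂ + I * l)
      (jacobiFlux (rho m₁ m₂ + I * l) (sphProfile m₁ m₂ (I * l))) t) 0 :=
    (hasDerivAt_ofReal_tanh.mul (hasDerivAt_jacobiAnsatz one_pos (analyticAt_jacobiFlux
      (analyticAt_sphProfile norm_ofReal_tanh_sq_lt_one)).differentiableAt)).continuousAt
  exact isJacobiSolution_sph.norm_mul_exp_le (mul_ne_zero I_ne_zero hl)
    hasDerivAt_sph.continuousAt hderiv sph_zero (by simp) ht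

lemma norm_Phi_mul_Del_mul_exp_le {r : ℝ} (hr : 0 < r) (hrl : r ≤ ‖l‖) (hl : 0 ≤ l.im)
    (ht : 0 < t) :
    ‖Phi m₁ m₂ l t‖ * Del m₁ m₂ t * Real.exp (-energyPhase m₁ m₂ (I * l) t / 2) ≤
      √2 * Real.exp (phaseDefect m₁ m₂ r / 2) := by
  have hre : |(-(I * l)).re| = (-(I * l)).re := abs_of_nonneg (by simpa)
  have hphase : energyPhase m₁ m₂ (I * l) = energyPhase m₁ m₂ (-(I * l)) := by
    ext t
    rw [energyPhase, energyPhase, neg_re, abs_neg, norm_neg]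
  have hone : PhiProfile m₁ m₂ (-(I * l)) 1 = 1 := by
    rw [PhiProfile, sub_self, hyp_zero]
  rw [hphase]
  refine (isJacobiSolution_Phi hl).norm_mul_Del_mul_exp_le hr (by simpa) ?_ ht
  rw [hre, Phi_eq_jacobiAnsatz]
  exact tendsto_jacobiEnergy_jacobiAnsatz_mul_rpow two_pos
    (analyticAt_PhiProfile (by simpa) (by simp)) hone

lemma norm_Phi_mul_Del_mul_norm_sph_le {r s : ℝ} (hr : 0 < r) (hrl : r ≤ ‖l‖) (hl : 0 ≤ l.im)
    (ht : 0 < t) (hs : 0 < s) :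
    ‖Phi m₁ m₂ l t‖ * Del m₁ m₂ t * ‖sph m₁ m₂ l s‖ ≤
      √2 * Real.exp (phaseDefect m₁ m₂ r) * Real.exp ((rho m₁ m₂ - l.im) * (t - s)) := by
  have hre : |(I * l).re| = l.im := by simpa using hl
  have hphase_t := energyPhase_le (m₁ := m₁) (m₂ := m₂) (μ := I * l) ht
  have hphase_s := energyPhase_ge (m₁ := m₁) (m₂ := m₂) (μ := I * l) (t := s) hr (by simpa)
  have hlog := mul_le_mul_of_nonneg_left (le_log_two_mul_cosh s) (rho_nonneg (m₁ := m₁) (m₂ := m₂))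
  rw [hre] at hphase_t hphase_s
  set φ := energyPhase m₁ m₂ (I * l)
  have hmul := mul_le_mul (norm_Phi_mul_Del_mul_exp_le (m₁ := m₁) (m₂ := m₂) hr hrl hl ht)
    (norm_sph_mul_exp_le (m₁ := m₁) (m₂ := m₂) (norm_pos_iff.1 (hr.trans_le hrl)) hs)
    (by positivity) (by positivity)
  have hexp : Real.exp (-φ t / 2) * Real.exp (φ s / 2) * Real.exp (φ t / 2 - φ s / 2) = 1 := by
    rw [← Real.exp_add, ← Real.exp_add, Real.exp_eq_one_iff]
    ring
  calc ‖Phi m₁ m₂ l t‖ * Del m₁ m₂ t * ‖sph m₁ m₂ l s‖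
      = ‖Phi m₁ m₂ l t‖ * Del m₁ m₂ t * Real.exp (-φ t / 2) *
          (‖sph m₁ m₂ l s‖ * Real.exp (φ s / 2)) * Real.exp (φ t / 2 - φ s / 2) := by
        linear_combination -(‖Phi m₁ m₂ l t‖ * Del m₁ m₂ t * ‖sph m₁ m₂ l s‖) * hexp
    _ ≤ √2 * Real.exp (phaseDefect m₁ m₂ r / 2) * 1 *
          Real.exp (phaseDefect m₁ m₂ r / 2 + (rho m₁ m₂ - l.im) * (t - s)) := by
        gcongr
        linarith
    _ = _ := by
        rw [mul_one, mul_assoc, mul_assoc, ← Real.exp_add, ← Real.exp_add]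
        ring_nf

end Solutions

section GammaFactor

lemma norm_betaIntegral_le {x y : ℝ} (hx : 0 < x) (hy : 0 < y) {u v : ℂ} (hu : x ≤ u.re)
    (hv : y ≤ v.re) : ‖betaIntegral u v‖ ≤ ProbabilityTheory.beta x y := by
  have hconv := betaIntegral_convergent (u := (x : ℂ)) (v := (y : ℂ)) hx hy
  rw [ProbabilityTheory.beta_eq_betaIntegralReal x y hx hy, betaIntegral, betaIntegral,
    ← reCLM_apply, ← reCLM.intervalIntegral_comp_comm hconv]
  refine intervalIntegral.norm_integral_le_of_norm_le zero_le_one ?_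
    ⟨reCLM.integrable_comp hconv.1, reCLM.integrable_comp hconv.2⟩
  filter_upwards [Measure.ae_ne volume (1 : ℝ)] with s hs₁ hs
  have hs₀ : 0 < s := hs.1
  have hs₁' : 0 < 1 - s := sub_pos.2 (lt_of_le_of_ne hs.2 hs₁)
  have hreal : (s : ℂ) ^ ((x : ℂ) - 1) * (1 - (s : ℂ)) ^ ((y : ℂ) - 1) =
      ((s ^ (x - 1) * (1 - s) ^ (y - 1) : ℝ) : ℂ) := by
    rw [ofReal_mul, ofReal_cpow hs₀.le, ofReal_cpow hs₁'.le]
    push_cast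
    rfl
  rw [hreal, reCLM_apply, ofReal_re, norm_mul, ← ofReal_one, ← ofReal_sub,
    norm_cpow_eq_rpow_re_of_pos hs₀, norm_cpow_eq_rpow_re_of_pos hs₁', sub_re, sub_re, ofReal_re]
  gcongr ?_ * ?_
  · exact Real.rpow_le_rpow_of_exponent_ge hs₀ hs.2 (by linarith)
  · exact Real.rpow_le_rpow_of_exponent_ge hs₁' (by linarith) (by linarith)

lemma norm_Gamma_add_natCast_le {z : ℂ} (hz : ∀ k : ℕ, z ≠ -k) (n : ℕ) :
    ‖Gamma (z + n)‖ ≤ (‖z‖ + n) ^ n * ‖Gamma z‖ := by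
  induction n with
  | zero => simp
  | succ n ih =>
    have hstep : z + (n + 1 : ℕ) = z + n + 1 := by
      push_cast
      ring
    have hnorm : ‖z + n‖ ≤ ‖z‖ + n := by simpa using norm_add_le z (n : ℂ)
    rw [hstep, Gamma_add_one _ fun h => hz n (eq_neg_of_add_eq_zero_left h), norm_mul]
    calc ‖z + n‖ * ‖Gamma (z + n)‖
        ≤ (‖z‖ + n) * ((‖z‖ + n) ^ n * ‖Gamma z‖) := by gcongr
      _ = (‖z‖ + n) ^ (n + 1) * ‖Gamma z‖ := by ring
      _ ≤ (‖z‖ + (n + 1 : ℕ)) ^ (n + 1) * ‖Gamma z‖ := by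
          gcongr
          exact n.le_succ

lemma Gamma_mul_Gamma_div_eq {a b c μ : ℂ} {n : ℕ} (hc : 2 * c = n + 1) (ha : 0 < a.re)
    (hb : 0 < b.re) (hμ : 0 ≤ μ.re) (hab : a + b = c + μ) :
    Gamma a * Gamma b / (Gamma c * Gamma (1 + μ)) =
      betaIntegral a b * betaIntegral (c + μ) c / Gamma c ^ 2 *
        (Gamma (1 + μ + n) / Gamma (1 + μ)) := by
  have hc_re : 0 < c.re := by
    have := congrArg re hc
    simp only [mul_re, re_ofNat, im_ofNat, zero_mul, sub_zero, add_re, natCast_re, one_re] at this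
    linarith [n.cast_nonneg (α := ℝ)]
  have hcμ : 0 < (c + μ).re := by
    rw [add_re]
    linarith
  have hΓc := Gamma_ne_zero_of_re_pos hc_re
  have hΓμ := Gamma_ne_zero_of_re_pos (one_add_re_pos hμ)
  have hbeta := Gamma_mul_Gamma_eq_betaIntegral hcμ hc_re
  have hsum : c + μ + c = 1 + μ + n := by linear_combination hc
  rw [hsum] at hbeta
  rw [Gamma_mul_Gamma_eq_betaIntegral ha hb, hab]
  field_simp
  linear_combination betaIntegral a b * hbeta

lemma norm_Gamma_mul_Gamma_div_le {x y c : ℝ} (hx : 0 < x) (hy : 0 < y) {n : ℕ}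
    (hc : 2 * c = n + 1) {a b μ : ℂ} (ha : x ≤ a.re) (hb : y ≤ b.re) (hμ : 0 ≤ μ.re)
    (hab : a + b = c + μ) :
    ‖Gamma a * Gamma b / (Gamma c * Gamma (1 + μ))‖ ≤
      ProbabilityTheory.beta x y * ProbabilityTheory.beta c c / Real.Gamma c ^ 2 *
        ((n + 1) * (1 + ‖μ‖)) ^ n := by
  have hc_pos : 0 < c := by linarith [n.cast_nonneg (α := ℝ)]
  have hbeta_xy := ProbabilityTheory.beta_pos hx hy
  have hbeta_c := ProbabilityTheory.beta_pos hc_pos hc_pos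
  have hΓμ := norm_pos_iff.2 (Gamma_ne_zero_of_re_pos (one_add_re_pos hμ))
  have hbase : ‖1 + μ‖ + n ≤ (n + 1) * (1 + ‖μ‖) := by
    have htri : ‖1 + μ‖ ≤ 1 + ‖μ‖ := by simpa using norm_add_le 1 μ
    nlinarith [n.cast_nonneg (α := ℝ), norm_nonneg μ]
  have hshift : ‖Gamma (1 + μ + n) / Gamma (1 + μ)‖ ≤ ((n + 1) * (1 + ‖μ‖)) ^ n := by
    rw [norm_div, div_le_iff₀ hΓμ]
    exact (norm_Gamma_add_natCast_le (ne_neg_natCast_of_re_pos (one_add_re_pos hμ)) n).trans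
      (by gcongr)
  rw [Gamma_mul_Gamma_div_eq (mod_cast congrArg ofReal hc) (hx.trans_le ha) (hy.trans_le hb) hμ hab,
    norm_mul, norm_div, norm_mul, norm_pow, Gamma_ofReal, norm_real, Real.norm_eq_abs, sq_abs]
  gcongr
  · exact norm_betaIntegral_le hx hy ha hb
  · exact norm_betaIntegral_le hc_pos hc_pos (by simpa) (ofReal_re c).ge

lemma norm_two_cpow_le_one {z : ℂ} (hz : z.re ≤ 0) : ‖(2 : ℂ) ^ z‖ ≤ 1 := by
  rw [← ofReal_ofNat, norm_cpow_eq_rpow_re_of_pos two_pos]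
  exact Real.rpow_le_one_of_one_le_of_nonpos one_le_two hz

lemma exists_norm_bfun_le {m₁ m₂ : ℕ} (hρ : 0 < rho m₁ m₂) :
    ∃ C > 0, ∀ l : ℂ, 0 ≤ l.im → l.im ≤ rho m₁ m₂ → ∀ t : ℝ,
      ‖bfun m₁ m₂ l t‖ ≤ C * (1 + ‖l‖) ^ (m₁ + m₂) * ‖Phi m₁ m₂ l t‖ := by
  set c : ℝ := (m₁ + m₂ + 1) / 2 with hc
  set y : ℝ := (m₁ + 2) / 4 with hy
  have hc_pos : 0 < c := by positivity
  have hy_pos : 0 < y := by positivity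
  have hbeta_y := ProbabilityTheory.beta_pos (half_pos hρ) hy_pos
  have hbeta_c := ProbabilityTheory.beta_pos hc_pos hc_pos
  refine ⟨ProbabilityTheory.beta (rho m₁ m₂ / 2) y * ProbabilityTheory.beta c c /
    Real.Gamma c ^ 2 * (m₁ + m₂ + 1) ^ (m₁ + m₂), by positivity, fun l hl hlρ t => ?_⟩
  have hre_two : (-(rho m₁ m₂ : ℂ) - 1 - I * l).re ≤ 0 := by
    rw [sub_re, sub_re, neg_re, ofReal_re, one_re, I_mul_re]
    linarith
  have hre_a : rho m₁ m₂ / 2 ≤ ((rho m₁ m₂ - I * l) / 2).re := by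
    rw [div_ofNat_re, sub_re, ofReal_re, I_mul_re]
    linarith
  have hre_b : y ≤ (((m₁ : ℂ) + 2) / 4 - I * l / 2).re := by
    rw [sub_re, div_ofNat_re, div_ofNat_re, add_re, natCast_re, re_ofNat, I_mul_re]
    linarith
  have hquot := norm_Gamma_mul_Gamma_div_le (c := c) (n := m₁ + m₂) (μ := -(I * l))
    (half_pos hρ) hy_pos (by push_cast; ring) hre_a hre_b (by simpa)
    (by rw [hc, rho]; push_cast; ring)
  have hc_cast : (c : ℂ) = (m₁ + m₂ + 1) / 2 := by
    rw [hc]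
    push_cast
    rfl
  rw [hc_cast, ← sub_eq_add_neg, norm_neg, norm_mul, norm_I, one_mul, mul_pow, ← mul_assoc,
    Nat.cast_add] at hquot
  rw [bfun, norm_mul, norm_mul]
  exact mul_le_mul_of_nonneg_right
    ((mul_le_of_le_one_left (norm_nonneg _) (norm_two_cpow_le_one hre_two)).trans hquot)
    (norm_nonneg _)

end GammaFactor

section Kernel

variable {m₁ m₂ : ℕ} {r : ℝ}

lemma exists_norm_bfun_mul_Del_mul_norm_sph_le (hρ : 0 < rho m₁ m₂) (hr : 0 < r) :
    ∃ C > 0, ∀ l : ℂ, 0 ≤ l.im → l.im ≤ rho m₁ m₂ → r ≤ ‖l‖ → ∀ t > 0, ∀ s > 0,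
      ‖bfun m₁ m₂ l t‖ * Del m₁ m₂ t * ‖sph m₁ m₂ l s‖ ≤
        C * (1 + ‖l‖) ^ (m₁ + m₂) * Real.exp ((rho m₁ m₂ - l.im) * (t - s)) := by
  obtain ⟨C, hC, hbfun⟩ := exists_norm_bfun_le hρ
  set A := √2 * Real.exp (phaseDefect m₁ m₂ r)
  refine ⟨C * A, by positivity, fun l hl hlρ hrl t ht s hs => ?_⟩
  have hDel := Del_pos (m₁ := m₁) (m₂ := m₂) ht
  calc ‖bfun m₁ m₂ l t‖ * Del m₁ m₂ t * ‖sph m₁ m₂ l s‖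
      ≤ C * (1 + ‖l‖) ^ (m₁ + m₂) * ‖Phi m₁ m₂ l t‖ * Del m₁ m₂ t * ‖sph m₁ m₂ l s‖ := by
        gcongr
        exact hbfun l hl hlρ t
    _ = C * (1 + ‖l‖) ^ (m₁ + m₂) *
          (‖Phi m₁ m₂ l t‖ * Del m₁ m₂ t * ‖sph m₁ m₂ l s‖) := by ring
    _ ≤ C * (1 + ‖l‖) ^ (m₁ + m₂) * (A * Real.exp ((rho m₁ m₂ - l.im) * (t - s))) := by
        exact mul_le_mul_of_nonneg_left
          (norm_Phi_mul_Del_mul_norm_sph_le hr hrl hl ht hs) (by positivity)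
    _ = _ := by ring

lemma exists_norm_kernel_le (hρ : 0 < rho m₁ m₂) (hr : 0 < r) :
    ∃ C > 0, ∀ l : ℂ, 0 ≤ l.im → l.im ≤ rho m₁ m₂ → r ≤ ‖l‖ → ∀ t > 0, ∀ s > t,
      ‖bfun m₁ m₂ l t‖ * ‖sph m₁ m₂ l s‖ * Del m₁ m₂ t ≤
        C * (1 + ‖l‖) ^ (m₁ + m₂) * Real.exp (-(rho m₁ m₂ - l.im) * (s - t)) ∧
      ‖sph m₁ m₂ l t‖ * ‖bfun m₁ m₂ l s‖ * Del m₁ m₂ t ≤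
        C * (1 + ‖l‖) ^ (m₁ + m₂) * Real.exp (-(rho m₁ m₂ - l.im) * (s - t)) := by
  obtain ⟨C, hC, hproduct⟩ := exists_norm_bfun_mul_Del_mul_norm_sph_le hρ hr
  refine ⟨C, hC, fun l hl hlρ hrl t ht s hts => ⟨?_, ?_⟩⟩
  · convert hproduct l hl hlρ hrl t ht s (ht.trans hts) using 1 <;> ring_nf
  · have hDel : Del m₁ m₂ t ≤ Del m₁ m₂ s * Real.exp (-(2 * rho m₁ m₂ * (s - t))) := by
      rw [Real.exp_neg, ← div_eq_mul_inv, le_div_iff₀ (Real.exp_pos _)]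
      exact Del_mul_exp_le ht hts.le
    calc ‖sph m₁ m₂ l t‖ * ‖bfun m₁ m₂ l s‖ * Del m₁ m₂ t
        ≤ ‖sph m₁ m₂ l t‖ * ‖bfun m₁ m₂ l s‖ *
            (Del m₁ m₂ s * Real.exp (-(2 * rho m₁ m₂ * (s - t)))) := by gcongr
      _ = ‖bfun m₁ m₂ l s‖ * Del m₁ m₂ s * ‖sph m₁ m₂ l t‖ *
            Real.exp (-(2 * rho m₁ m₂ * (s - t))) := by ring
      _ ≤ C * (1 + ‖l‖) ^ (m₁ + m₂) * Real.exp ((rho m₁ m₂ - l.im) * (s - t)) *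
            Real.exp (-(2 * rho m₁ m₂ * (s - t))) := by
          exact mul_le_mul_of_nonneg_right (hproduct l hl hlρ hrl s (ht.trans hts) t ht)
            (Real.exp_pos _).le
      _ = C * (1 + ‖l‖) ^ (m₁ + m₂) * Real.exp (-(rho m₁ m₂ + l.im) * (s - t)) := by
          rw [mul_assoc, ← Real.exp_add]
          ring_nf
      _ ≤ C * (1 + ‖l‖) ^ (m₁ + m₂) * Real.exp (-(rho m₁ m₂ - l.im) * (s - t)) := by
          gcongr
          linarith

end Kernel

section Volterra

lemma setLIntegral_Ioi_comp_add_right (F : ℝ → ENNReal) (a r : ℝ) :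
    ∫⁻ s in Ioi a, F (s + r) = ∫⁻ s in Ioi (a + r), F s := by
  rw [← (measurePreserving_add_right volume r).setLIntegral_comp_preimage_emb
    (measurableEmbedding_addRight r) F, preimage_add_const_Ioi, add_sub_cancel_right]

lemma setLIntegral_Ioi_setLIntegral_Ioi_mul_sub_le {F k : ℝ → ENNReal} (hF : Measurable F)
    (hk : Measurable k) (a : ℝ) :
    ∫⁻ t in Ioi a, ∫⁻ s in Ioi t, F s * k (s - t) ≤
      (∫⁻ s in Ioi a, F s) * ∫⁻ r in Ioi 0, k r := by
  have hshift (t : ℝ) : ∫⁻ s in Ioi t, F s * k (s - t) = ∫⁻ r in Ioi 0, F (t + r) * k r := by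
    simpa [add_comm] using
      (setLIntegral_Ioi_comp_add_right (fun s => F s * k (s - t)) 0 t).symm
  simp only [hshift]
  rw [lintegral_lintegral_swap (by fun_prop), ← lintegral_const_mul _ hk]
  refine setLIntegral_mono (by fun_prop) fun r hr => ?_
  rw [lintegral_mul_const _ (by fun_prop), setLIntegral_Ioi_comp_add_right]
  gcongr
  exact le_add_of_nonneg_right (mem_Ioi.1 hr).le

lemma lintegral_Ioi_exp_neg_mul {δ : ℝ} (hδ : 0 < δ) {M : ℝ} (hM : 0 ≤ M) :
    ∫⁻ r in Ioi (0 : ℝ), ENNReal.ofReal (M * Real.exp (-δ * r)) = ENNReal.ofReal (M / δ) := by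
  rw [← ofReal_integral_eq_lintegral_ofReal, integral_const_mul,
    integral_exp_mul_Ioi (neg_lt_zero.2 hδ)]
  · simp [div_eq_mul_inv]
  · exact (integrableOn_exp_mul_Ioi (neg_lt_zero.2 hδ) 0).const_mul M
  · exact Eventually.of_forall fun r => by positivity

/-- The Volterra operator `f ↦ ∫_t^∞ (p(t) q(s) - q(t) p(s)) f(s) D(s) ds`. For `p = b_λ`,
`q = φ_λ` and `D = Δ` it is `T_λ`. -/
def volterraOperator (p q : ℝ → ℂ) (D : ℝ → ℝ) (f : ℝ → ℂ) (t : ℝ) : ℂ :=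
  p t * (∫ s in Ioi t, f s * q s * (D s : ℂ)) - q t * ∫ s in Ioi t, f s * p s * (D s : ℂ)

variable {p q f : ℝ → ℂ} {D k : ℝ → ℝ} {t : ℝ}

lemma ofReal_norm_mul_integral_mul_le (hDt : 0 ≤ D t) (hD : ∀ s > t, 0 ≤ D s)
    (hk : ∀ s > t, ‖p t‖ * ‖q s‖ * D t ≤ k (s - t)) :
    ENNReal.ofReal (‖p t * ∫ s in Ioi t, f s * q s * (D s : ℂ)‖ * D t) ≤
      ∫⁻ s in Ioi t, ENNReal.ofReal (‖f s‖ * D s) * ENNReal.ofReal (k (s - t)) := by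
  have hinside : ‖p t * ∫ s in Ioi t, f s * q s * (D s : ℂ)‖ * D t =
      ‖∫ s in Ioi t, p t * D t * (f s * q s * (D s : ℂ))‖ := by
    rw [integral_const_mul, norm_mul, norm_mul, norm_mul, norm_real, Real.norm_of_nonneg hDt]
    ring
  rw [hinside, ofReal_norm]
  refine (enorm_integral_le_lintegral_enorm _).trans
    (setLIntegral_mono' measurableSet_Ioi fun s hs => ?_)
  have hDs := hD s hs
  rw [← ofReal_norm, ← ENNReal.ofReal_mul (by positivity)]
  refine ENNReal.ofReal_le_ofReal ?_
  simp only [norm_mul, norm_real, Real.norm_of_nonneg hDt, Real.norm_of_nonneg hDs]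
  calc ‖p t‖ * D t * (‖f s‖ * ‖q s‖ * D s) = ‖f s‖ * D s * (‖p t‖ * ‖q s‖ * D t) := by ring
    _ ≤ ‖f s‖ * D s * k (s - t) := by
        gcongr
        exact hk s hs

lemma ofReal_norm_volterraOperator_mul_le (hDt : 0 ≤ D t) (hD : ∀ s > t, 0 ≤ D s)
    (hpq : ∀ s > t, ‖p t‖ * ‖q s‖ * D t ≤ k (s - t))
    (hqp : ∀ s > t, ‖q t‖ * ‖p s‖ * D t ≤ k (s - t)) :
    ENNReal.ofReal (‖volterraOperator p q D f t‖ * D t) ≤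
      2 * ∫⁻ s in Ioi t, ENNReal.ofReal (‖f s‖ * D s) * ENNReal.ofReal (k (s - t)) := by
  have hbounds := add_le_add (ofReal_norm_mul_integral_mul_le (f := f) hDt hD hpq)
    (ofReal_norm_mul_integral_mul_le (f := f) hDt hD hqp)
  rw [← ENNReal.ofReal_add (by positivity) (by positivity), ← add_mul, ← two_mul] at hbounds
  refine (ENNReal.ofReal_le_ofReal ?_).trans hbounds
  gcongr
  exact norm_sub_le _ _

lemma lintegral_norm_volterraOperator_mul_le (hf : Measurable f) (hD : Measurable D)
    (hD₀ : ∀ t > 0, 0 ≤ D t) (hk : Measurable k)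
    (hpq : ∀ t > 0, ∀ s > t, ‖p t‖ * ‖q s‖ * D t ≤ k (s - t))
    (hqp : ∀ t > 0, ∀ s > t, ‖q t‖ * ‖p s‖ * D t ≤ k (s - t)) :
    ∫⁻ t in Ioi (0 : ℝ), ENNReal.ofReal (‖volterraOperator p q D f t‖ * D t) ≤
      2 * ((∫⁻ s in Ioi (0 : ℝ), ENNReal.ofReal (‖f s‖ * D s)) *
        ∫⁻ r in Ioi (0 : ℝ), ENNReal.ofReal (k r)) := by
  calc ∫⁻ t in Ioi (0 : ℝ), ENNReal.ofReal (‖volterraOperator p q D f t‖ * D t)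
      ≤ ∫⁻ t in Ioi (0 : ℝ), 2 * ∫⁻ s in Ioi t,
          ENNReal.ofReal (‖f s‖ * D s) * ENNReal.ofReal (k (s - t)) :=
        setLIntegral_mono' measurableSet_Ioi fun t ht => ofReal_norm_volterraOperator_mul_le
          (hD₀ t ht) (fun s hs => hD₀ s (ht.trans hs)) (hpq t ht) (hqp t ht)
    _ = 2 * ∫⁻ t in Ioi (0 : ℝ), ∫⁻ s in Ioi t,
          ENNReal.ofReal (‖f s‖ * D s) * ENNReal.ofReal (k (s - t)) :=
        lintegral_const_mul' _ _ ENNReal.ofNat_ne_top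
    _ ≤ _ := by
        gcongr
        exact setLIntegral_Ioi_setLIntegral_Ioi_mul_sub_le (by fun_prop)
          (k := fun r => ENNReal.ofReal (k r)) (by fun_prop) 0

end Volterra

theorem stmt8_general (m₁ m₂ : ℕ) {r : ℝ} (hr : 0 < r) :
    ∃ (C : ℝ) (L : ℕ), 0 < C ∧
      ∀ l : ℂ, 0 ≤ l.im → l.im < rho m₁ m₂ → r ≤ ‖l‖ →
        ∀ f : ℝ → ℂ, Measurable f →
          IntegrableOn (fun s : ℝ => ‖f s‖ * Del m₁ m₂ s) (Set.Ioi 0) →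
          (∫⁻ t in Set.Ioi (0 : ℝ), ENNReal.ofReal (‖Tfun m₁ m₂ l f t‖ * Del m₁ m₂ t)) ≤
            ENNReal.ofReal
              (C * (∫ s in Set.Ioi (0 : ℝ), ‖f s‖ * Del m₁ m₂ s) * (1 + ‖l‖) ^ L /
                (rho m₁ m₂ - l.im)) := by
  rcases rho_nonneg (m₁ := m₁) (m₂ := m₂) |>.eq_or_lt with hρ | hρ
  · exact ⟨1, 0, one_pos, fun l hl hlρ => absurd (hl.trans_lt hlρ) hρ.not_lt⟩
  obtain ⟨C, hC, hkernel⟩ := exists_norm_kernel_le hρ hr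
  refine ⟨2 * C, m₁ + m₂, by positivity, fun l hl hlρ hrl f hf hint => ?_⟩
  have hkernel_l := hkernel l hl hlρ.le hrl
  have hf_nonneg : 0 ≤ᵐ[volume.restrict (Ioi 0)] fun s => ‖f s‖ * Del m₁ m₂ s :=
    (ae_restrict_mem measurableSet_Ioi).mono fun s hs =>
      mul_nonneg (norm_nonneg _) (Del_pos hs).le
  refine (lintegral_norm_volterraOperator_mul_le hf (by unfold Del; fun_prop)
    (fun t ht => (Del_pos ht).le)
    (k := fun x => C * (1 + ‖l‖) ^ (m₁ + m₂) * Real.exp (-(rho m₁ m₂ - l.im) * x)) (by fun_prop)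
    (fun t ht s hts => (hkernel_l t ht s hts).1)
    fun t ht s hts => (hkernel_l t ht s hts).2).trans_eq ?_
  rw [lintegral_Ioi_exp_neg_mul (sub_pos.2 hlρ) (by positivity),
    ← ofReal_integral_eq_lintegral_ofReal hint hf_nonneg, ← ENNReal.ofReal_ofNat,
    ← ENNReal.ofReal_mul (integral_nonneg_of_ae hf_nonneg), ← ENNReal.ofReal_mul two_pos.le]
  congr 1
  ring

theorem stmt8 (m₁ m₂ : ℕ) (hm₁ : 1 ≤ m₁) :
    ∃ (C : ℝ) (L : ℕ), 0 < C ∧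
      ∀ l : ℂ, 0 < l.im → l.im < rho m₁ m₂ → rho m₁ m₂ ≤ ‖l‖ →
        ∀ f : ℝ → ℂ, Measurable f →
          IntegrableOn (fun s : ℝ => ‖f s‖ * Del m₁ m₂ s) (Set.Ioi 0) →
          (∫⁻ t in Set.Ioi (0 : ℝ), ENNReal.ofReal (‖Tfun m₁ m₂ l f t‖ * Del m₁ m₂ t)) ≤
            ENNReal.ofReal
              (C * (∫ s in Set.Ioi (0 : ℝ), ‖f s‖ * Del m₁ m₂ s) * (1 + ‖l‖) ^ L /
                (rho m₁ m₂ - l.im)) :=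
  let ⟨C, L, hC, hbound⟩ := stmt8_general m₁ m₂ (rho_pos (m₂ := m₂) hm₁)
  ⟨C, L, hC, fun l hl => hbound l hl.le⟩

end
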